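/- For integers a, b with a > b + 1 and b ≥ 4, the MV assignment M^a V^b on the 1×(a+b+1) strip of stamps satisfies c(M^a V^b) = ab + b² − b + 1. -/

import Mathlib

/-- A crease direction: mountain or valley. -/
inductive MV : Type
  | M : MV
  | V : MV
deriving DecidableEq

/-- The value `σ(i)` of a layer ordering at face `i`, as a natural number
(`0` if `i` is out of range). -/
def faceVal {n : ℕ} (σ : Equiv.Perm (Fin n)) (i : ℕ) : ℕ :=
  if h : i < n then (σ ⟨i, h⟩ : Fin n) else 0

/-- Condition (1): the layer ordering respects the mountain–valley assignment. -/
def MVRelations (n : ℕ) (μ : ℕ → MV) (σ : Equiv.Perm (Fin n)) : Prop :=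
  ∀ i, i + 1 < n →
    if (μ i = MV.M ∧ Even i) ∨ (μ i = MV.V ∧ Odd i)
    then faceVal σ (i + 1) < faceVal σ i
    else faceVal σ i < faceVal σ (i + 1)

/-- `x` lies strictly between `lo` and `hi` (in either order). -/
def StrictlyBetween (x a b : ℕ) : Prop := min a b < x ∧ x < max a b

/-- Condition (2): no two creases on the same side cross. -/
def NoCrossings (n : ℕ) (σ : Equiv.Perm (Fin n)) : Prop :=
  ∀ i j, i + 1 < n → j + 1 < n → i % 2 = j % 2 →
    ¬ Xor' (StrictlyBetween (faceVal σ j) (faceVal σ i) (faceVal σ (i + 1)))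
           (StrictlyBetween (faceVal σ (j + 1)) (faceVal σ i) (faceVal σ (i + 1)))

/-- A valid layer ordering for the MV assignment `μ` on the `1 × n` strip. -/
def ValidLayerOrdering (n : ℕ) (μ : ℕ → MV) (σ : Equiv.Perm (Fin n)) : Prop :=
  MVRelations n μ σ ∧ NoCrossings n σ

/-- `c(μ)`: the number of valid layer orderings for `μ` on the `1 × n` strip. -/
noncomputable def foldCount (n : ℕ) (μ : ℕ → MV) : ℕ :=
  Nat.card {σ : Equiv.Perm (Fin n) // ValidLayerOrdering n μ σ}

/-
Number the faces so that the change from mountains to valleys is at face `0`: the faces are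
`l, …, r` with `l = -a` and `r = b`, and both arms spiral around face `0`. If the last mountain
crease wraps around nothing, removing the last mountain face is a bijection onto the folds of the
shorter strip. Otherwise either the arm leaves its spiral on the outside, and then the last crease
wraps around every face `y` with `l + 1 < y < -l`; or it leaves on the inside, and then the crease
can only wrap around faces `y ≥ -l - 2`, which forces `-l ≤ r + 2`. By reattaching faces one at a
time one finds that for `-l > r + 2` exactly `r` folds have a nontrivial last crease, whereas for
`-l = n, n + 1, n + 2` and `r = n` the inner spirals contribute as well and the number is `2n - 2`,
`2n - 1`, `2n`. Summing the increments along the diagonal, where the mirror image supplies the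
valley steps, and then along the mountain arm gives the quadratic formula.
-/

/-! ### Flat folds and their spirals -/

theorem mem_uIoo_iff {x y z : ℤ} : x ∈ Set.uIoo y z ↔ y < x ∧ x < z ∨ z < x ∧ x < y := by
  simp only [Set.uIoo, Set.mem_Ioo]
  omega

/-- Face `y` lies strictly between the two faces `x`, `x + 1` of a crease, so that the crease wraps
around it; `p` gives the position of every face in the stack. -/
def Encloses (p : ℤ → ℤ) (x y : ℤ) : Prop := p y ∈ Set.uIoo (p x) (p (x + 1))

/-- A flat fold of the strip of faces `l, …, r` whose creases are mountains on the negative side of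
face `0` and valleys on its positive side; `p` gives the position of every face in the stack, and
only the relative order of the positions matters. The stack is oriented so that face `-1` is above
face `0`. -/
structure IsFold (l r : ℤ) (p : ℤ → ℤ) : Prop where
  left_neg : l < 0
  right_pos : 0 < r
  injOn : Set.InjOn p (Set.Icc l r)
  descends_iff (x : ℤ) (hlx : l ≤ x := by omega) (hxr : x < r := by omega) :
    p (x + 1) < p x ↔ (0 ≤ x ↔ x % 2 = 0)
  noCross (x y : ℤ) (hlx : l ≤ x := by omega) (hxr : x < r := by omega) (hly : l ≤ y := by omega)
    (hyr : y < r := by omega) (hxy : x % 2 = y % 2 := by omega) (hne : x ≠ y := by omega) :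
    Encloses p x y ↔ Encloses p x (y + 1)

/-- The mountain arm, which ends at face `l`, leaves the stack at `l` on the outside of its
spiral: the last crease wraps around the last but one. -/
def Outward (p : ℤ → ℤ) (l : ℤ) : Prop := l = -1 ∨ Encloses p l (l + 2)

/-- The half turn of a fold, exchanging its mountain and valley arms. -/
def mirrorImage (p : ℤ → ℤ) : ℤ → ℤ := fun x => -p (-x)

theorem encloses_iff {p : ℤ → ℤ} {x y : ℤ} :
    Encloses p x y ↔ p x < p y ∧ p y < p (x + 1) ∨ p (x + 1) < p y ∧ p y < p x :=
  mem_uIoo_iff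

theorem mirrorImage_mem_uIoo_iff {p : ℤ → ℤ} {x y z : ℤ} :
    mirrorImage p x ∈ Set.uIoo (mirrorImage p y) (mirrorImage p z) ↔
      p (-x) ∈ Set.uIoo (p (-y)) (p (-z)) := by
  simp only [mirrorImage, mem_uIoo_iff]
  omega

theorem encloses_mirrorImage {p : ℤ → ℤ} {x y : ℤ} :
    Encloses (mirrorImage p) x y ↔ Encloses p (-x - 1) (-y) := by
  rw [Encloses, mirrorImage_mem_uIoo_iff, Set.uIoo_comm, Encloses, neg_add', sub_add_cancel]

theorem mirrorImage_mirrorImage (p : ℤ → ℤ) : mirrorImage (mirrorImage p) = p := by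
  ext x
  simp only [mirrorImage, neg_neg]

namespace IsFold

variable {l r : ℤ} {p : ℤ → ℤ}

theorem ne (h : IsFold l r p) (x y : ℤ) (hlx : l ≤ x := by omega) (hxr : x ≤ r := by omega)
    (hly : l ≤ y := by omega) (hyr : y ≤ r := by omega) (hxy : x ≠ y := by omega) : p x ≠ p y :=
  h.injOn.ne ⟨hlx, hxr⟩ ⟨hly, hyr⟩ hxy

theorem mirror (h : IsFold l r p) : IsFold (-r) (-l) (mirrorImage p) where
  left_neg := by have := h.right_pos; omega
  right_pos := by have := h.left_neg; omega
  injOn x hx y hy e :=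
    neg_injective (h.injOn ⟨by grind, by grind⟩ ⟨by grind, by grind⟩ (neg_injective e))
  descends_iff x hlx hxr := by
    have := h.descends_iff (-x - 1)
    simp only [mirrorImage, neg_add']
    grind
  noCross x y hlx hxr hly hyr hxy hne := by
    have := h.noCross (-x - 1) (-y - 1)
    rw [encloses_mirrorImage, encloses_mirrorImage, neg_add', this, sub_add_cancel]

theorem extremum (h : IsFold l r p) (x : ℤ) (hlx : l < x := by omega) (hxr : x < r := by omega)
    (hx : x ≠ 0 := by omega) :
    p x < p (x - 1) ∧ p x < p (x + 1) ∨ p (x - 1) < p x ∧ p (x + 1) < p x := by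
  have := h.descends_iff (x - 1)
  have := h.descends_iff x
  have := h.ne (x - 1) x
  have := h.ne (x + 1) x
  grind

theorem center (h : IsFold l r p) : p 1 < p 0 ∧ p 0 < p (-1) := by
  have := h.left_neg
  have := h.right_pos
  have := h.descends_iff (-1)
  have := h.descends_iff 0
  grind

theorem mono (h : IsFold l r p) {l' r' : ℤ} (hl : l ≤ l') (hr : r' ≤ r) (hl' : l' < 0)
    (hr' : 0 < r') : IsFold l' r' p where
  left_neg := hl'
  right_pos := hr'
  injOn := h.injOn.mono (Set.Icc_subset_Icc hl hr)
  descends_iff x _ _ := h.descends_iff x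
  noCross x y _ _ _ _ _ _ := h.noCross x y

theorem outward_succ (h : IsFold l r p) (hl : l < -1) (ho : Outward p l) : Outward p (l + 1) := by
  have := h.right_pos
  rcases eq_or_ne l (-2) with rfl | hl2
  · exact Or.inl rfl
  · have ho' : Encloses p l (l + 2) := ho.resolve_left (by omega)
    have hpartner : Encloses p l (l + 2 + 1) := (h.noCross l (l + 2)).1 ho'
    have := h.extremum (l + 2)
    right
    grind [encloses_iff]

theorem encloses_of_outward (h : IsFold l r p) (ho : Outward p l) (y : ℤ)
    (hly : l + 1 < y := by omega) (hyl : y < -l := by omega) (hyr : y ≤ r := by omega) :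
    Encloses p l y := by
  induction l, Int.le_sub_one_of_lt h.left_neg using Int.leInductionDown generalizing y with
  | base => omega
  | pred l hl ih =>
    have ho' := h.outward_succ (by omega) ho
    rw [sub_add_cancel] at ho'
    have nested (z : ℤ) (hz : Encloses p l z) : Encloses p (l - 1) z := by
      have : Encloses p (l - 1) (l + 1) := by unfold Outward at ho; grind
      grind [encloses_iff]
    have enclosed (z : ℤ) (hlz : l < z) (hzl : z < -l) (hzr : z ≤ r) : Encloses p (l - 1) z := by
      rcases eq_or_ne z (l + 1) with rfl | hz
      · unfold Outward at ho; grind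
      · have hf : IsFold l r p := h.mono (by omega) le_rfl (by omega) h.right_pos
        exact nested z (ih hf ho' z (by omega) hzl hzr)
    rcases eq_or_ne y (-l) with rfl | hy
    · have := h.noCross (l - 1) (-l - 1)
      grind
    · exact enclosed y (by omega) (by omega) hyr

theorem encloses_sub_one (h : IsFold (l - 1) r p) (hl : l < 0) (hi : ¬Outward p (l - 1)) :
    Encloses p l (l - 1) := by
  have := h.right_pos
  have := h.extremum l
  have := h.ne (l - 1) (l + 1)
  have hi' : ¬Encloses p (l - 1) (l + 1) := fun ho => hi (Or.inr (by grind))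
  grind [encloses_iff]

theorem encloses_of_encloses_sub_one (h : IsFold (l - 1) r p) (hl : l < 0)
    (hi : ¬Outward p (l - 1)) {y : ℤ} (hy : Encloses p (l - 1) y) : Encloses p l y := by
  have := h.encloses_sub_one hl hi
  grind [encloses_iff]

theorem neg_le_of_encloses (h : IsFold l r p) (hi : ¬Outward p l) (y : ℤ)
    (hy : Encloses p l y) (hly : l ≤ y := by omega) (hyr : y ≤ r := by omega) : -l - 2 ≤ y := by
  induction l, Int.le_sub_one_of_lt h.left_neg using Int.leInductionDown generalizing y with
  | base => exact absurd (Or.inl rfl) hi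
  | pred l hl ih =>
    have hr := h.right_pos
    have hf : IsFold l r p := h.mono (by omega) le_rfl (by omega) hr
    have hy' : Encloses p l y := h.encloses_of_encloses_sub_one (by omega) hi hy
    have hmid : Encloses p l (l - 1) := h.encloses_sub_one (by omega) hi
    have hly' : l + 1 < y := by
      obtain hy | rfl | rfl | rfl : l + 1 < y ∨ y = l - 1 ∨ y = l ∨ y = l + 1 := by omega
      all_goals grind [encloses_iff]
    by_contra! hlt
    by_cases ho : Outward p l
    · have := h.noCross (l + 1) (l - 1)
      have : Encloses p l (l + 2) := by unfold Outward at ho; grind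
      rcases eq_or_ne y (l + 2) with rfl | hy2
      · grind [encloses_iff]
      · have hs := hf.outward_succ (by omega) ho
        have := (hf.mono (l' := l + 1) (by omega) le_rfl (by omega) hr).encloses_of_outward hs y
        grind [encloses_iff]
    · obtain rfl : y = -l - 2 := by have := ih hf ho y hy'; omega
      have hpartner : Encloses p (l - 1) (-l - 3) := by
        have := h.noCross (l - 1) (-l - 3)
        grind
      have := ih hf ho (-l - 3) (h.encloses_of_encloses_sub_one (by omega) hi hpartner)
      omega

theorem encloses_right_of_outward (h : IsFold l r p) (ho : Encloses p (r - 1) (r - 2)) (y : ℤ)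
    (hly : l ≤ y := by omega) (hry : -r < y := by omega) (hyr : y < r - 1 := by omega) :
    Encloses p (r - 1) y := by
  have ho' : Outward (mirrorImage p) (-r) := Or.inr (by rw [encloses_mirrorImage]; grind)
  have := h.mirror.encloses_of_outward ho' (-y)
  rw [encloses_mirrorImage] at this
  grind

theorem le_neg_of_encloses_right (h : IsFold l r p) (hr : r ≠ 1) (hi : ¬Encloses p (r - 1) (r - 2))
    (y : ℤ) (hy : Encloses p (r - 1) y) (hly : l ≤ y := by omega) (hyr : y ≤ r := by omega) :
    y ≤ 2 - r := by
  have hi' : ¬Outward (mirrorImage p) (-r) := by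
    rw [Outward, encloses_mirrorImage]
    grind
  have := h.mirror.neg_le_of_encloses hi' (-y) (by rw [encloses_mirrorImage]; grind)
  omega

theorem encloses_pred {n : ℤ} (h : IsFold (-n) n p) (hn : Encloses p (-n) n) :
    Encloses p (-n) (n - 1) := by
  induction n, Int.add_one_le_of_lt h.right_pos using Int.leInduction with
  | base =>
    have := h.center
    grind [encloses_iff]
  | succ n _ ih =>
    rw [neg_add'] at *
    by_cases ho : Outward p (-n - 1)
    · exact h.encloses_of_outward ho _
    by_contra hpred
    have hmid : Encloses p (-n) (-n - 1) := h.encloses_sub_one (by omega) ho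
    have hinner : Encloses p (-n) n :=
      (h.noCross (-n) n).2 (h.encloses_of_encloses_sub_one (by omega) ho hn)
    have hinner' := ih (h.mono (by omega) (by omega) (by omega) (by omega)) hinner
    have := h.noCross (-n - 1) (n - 1)
    have := h.extremum n
    have hright : Encloses p (n + 1 - 1) (n + 1 - 2) := by grind [encloses_iff]
    have := h.encloses_right_of_outward hright (-n)
    grind [encloses_iff]

theorem not_encloses_last {n : ℤ} (h : IsFold (-n) n p) (hn : Encloses p (-n) n) (y : ℤ)
    (hly : -n ≤ y := by omega) (hyr : y ≤ n := by omega) : ¬Encloses p (n - 1) y := by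
  intro hy
  have := h.encloses_pred hn
  have hn1 : n ≠ 1 := by rintro rfl; have := h.center; grind [encloses_iff]
  have hn0 := h.right_pos
  have hi : ¬Encloses p (n - 1) (n - 2) := fun ho => by
    have := h.encloses_right_of_outward ho (1 - n)
    grind [encloses_iff]
  have := h.le_neg_of_encloses_right hn1 hi y hy
  have := h.noCross (n - 1) (1 - n)
  have : y = -n ∨ y = 1 - n ∨ y = 2 - n := by omega
  grind [encloses_iff]

theorem encloses_of_encloses_pred {n : ℤ} (h : IsFold (-n) n p) (hi : ¬Outward p (-n))
    (hn : Encloses p (-n) (n - 1)) : Encloses p (-n) n := by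
  by_contra hlast
  have hn1 : n ≠ 1 := by rintro rfl; exact hi (Or.inl rfl)
  have hn0 := h.right_pos
  have hi' : ¬Encloses p (-n) (-n + 2) := fun ho => hi (Or.inr ho)
  by_cases ho : Encloses p (n - 1) (n - 2)
  · have := h.encloses_right_of_outward ho (1 - n)
    have := h.noCross (n - 1) (1 - n)
    have := h.extremum (1 - n)
    grind [encloses_iff]
  · have := h.noCross (-n) (n - 2)
    have := h.extremum (n - 1)
    grind [encloses_iff]

theorem encloses_last_of_encloses (h : IsFold l r p) (hr : r ≤ -l) (hi : ¬Outward p l) (y : ℤ)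
    (hy : Encloses p l y) (hly : l ≤ y := by omega) (hyr : y ≤ r := by omega) :
    Encloses p l r := by
  have := h.neg_le_of_encloses hi y hy
  have hl : l ≠ -1 := fun e => hi (Or.inl e)
  have hl0 := h.left_neg
  have hr' : y = r ∨ y = -l - 2 ∧ r = -l - 1 ∨ r = -l := by omega
  rcases hr' with rfl | ⟨rfl, rfl⟩ | rfl
  · exact hy
  · have := h.noCross l (-l - 2)
    grind
  · obtain ⟨n, rfl⟩ : ∃ n, l = -n := ⟨-l, (neg_neg l).symm⟩
    rw [neg_neg] at *
    have := h.noCross (-n) (n - 2)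
    rcases eq_or_ne y n with rfl | hyn
    · exact hy
    · exact h.encloses_of_encloses_pred hi (by grind)

end IsFold

/-! ### Counting stacking orders -/

/-- The order in which `p` stacks the faces `l, …, r`, as a set of pairs. -/
def layerOrder (l r : ℤ) (p : ℤ → ℤ) : Set (ℤ × ℤ) :=
  {xy | xy ∈ Set.Icc l r ×ˢ Set.Icc l r ∧ p xy.1 < p xy.2}

/-- The positions `p` and `q` stack the faces `l, …, r` in the same order. -/
def SameOrder (l r : ℤ) (p q : ℤ → ℤ) : Prop :=
  ∀ x y, l ≤ x → x ≤ r → l ≤ y → y ≤ r → (p x < p y ↔ q x < q y)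

/-- The property `C` of a position function only depends on the order in which it stacks the faces
`l, …, r`. -/
def OrderInvariant (l r : ℤ) (C : (ℤ → ℤ) → Prop) : Prop :=
  ∀ p q, SameOrder l r p q → (C p ↔ C q)

/-- The number of stacking orders of the folds of the strip `l, …, r` which satisfy `C`. -/
noncomputable def numFolds (l r : ℤ) (C : (ℤ → ℤ) → Prop) : ℕ :=
  (layerOrder l r '' {p | IsFold l r p ∧ C p}).ncard

section Counting

variable {l r n : ℤ} {p q : ℤ → ℤ} {C D : (ℤ → ℤ) → Prop}

theorem layerOrder_eq_iff : layerOrder l r p = layerOrder l r q ↔ SameOrder l r p q := by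
  simp only [layerOrder, Set.ext_iff, Prod.forall, Set.mem_ofPred_eq, Set.mem_prod, Set.mem_Icc]
  exact ⟨fun h x y _ _ _ _ => by grind, fun h x y => by have := h x y; grind⟩

theorem SameOrder.lt_iff_lt (h : SameOrder l r p q) (x y : ℤ) (hlx : l ≤ x := by omega)
    (hxr : x ≤ r := by omega) (hly : l ≤ y := by omega) (hyr : y ≤ r := by omega) :
    p x < p y ↔ q x < q y :=
  h x y hlx hxr hly hyr

theorem SameOrder.symm (h : SameOrder l r p q) : SameOrder l r q p :=
  fun x y _ _ _ _ => (h.lt_iff_lt x y).symm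

theorem SameOrder.mem_uIoo_iff_mem_uIoo (h : SameOrder l r p q) (x y z : ℤ)
    (hlx : l ≤ x := by omega) (hxr : x ≤ r := by omega) (hly : l ≤ y := by omega)
    (hyr : y ≤ r := by omega) (hlz : l ≤ z := by omega) (hzr : z ≤ r := by omega) :
    p x ∈ Set.uIoo (p y) (p z) ↔ q x ∈ Set.uIoo (q y) (q z) := by
  rw [mem_uIoo_iff, mem_uIoo_iff, h.lt_iff_lt y x, h.lt_iff_lt x z, h.lt_iff_lt z x,
    h.lt_iff_lt x y]

theorem SameOrder.encloses_iff_encloses (h : SameOrder l r p q) (x y : ℤ) (hlx : l ≤ x := by omega)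
    (hxr : x < r := by omega) (hly : l ≤ y := by omega) (hyr : y ≤ r := by omega) :
    Encloses p x y ↔ Encloses q x y :=
  h.mem_uIoo_iff_mem_uIoo y x (x + 1)

theorem SameOrder.isFold (h : SameOrder l r p q) (hp : IsFold l r p) : IsFold l r q where
  left_neg := hp.left_neg
  right_pos := hp.right_pos
  injOn x hx y hy e := hp.injOn hx hy (by
    have := h x y hx.1 hx.2 hy.1 hy.2
    have := h y x hy.1 hy.2 hx.1 hx.2
    omega)
  descends_iff x hlx hxr := by rw [← h.lt_iff_lt (x + 1) x, hp.descends_iff x]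
  noCross x y hlx hxr hly hyr hxy hne := by
    rw [← h.encloses_iff_encloses x y, ← h.encloses_iff_encloses x (y + 1), hp.noCross x y]

theorem orderInvariant_encloses {x y : ℤ} (hlx : l ≤ x := by omega) (hxr : x < r := by omega)
    (hly : l ≤ y := by omega) (hyr : y ≤ r := by omega) :
    OrderInvariant l r (Encloses · x y) :=
  fun _ _ h => h.encloses_iff_encloses x y

theorem orderInvariant_outward {x : ℤ} (hlx : l ≤ x := by omega) (hxr : x + 2 ≤ r := by omega) :
    OrderInvariant l r (Outward · x) :=
  fun _ _ h => or_congr_right (h.encloses_iff_encloses x (x + 2))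

theorem OrderInvariant.and (hC : OrderInvariant l r C) (hD : OrderInvariant l r D) :
    OrderInvariant l r (fun p => C p ∧ D p) :=
  fun p q h => and_congr (hC p q h) (hD p q h)

theorem OrderInvariant.not (hC : OrderInvariant l r C) : OrderInvariant l r (fun p => ¬C p) :=
  fun p q h => not_congr (hC p q h)

theorem numFolds_congr (h : ∀ p, IsFold l r p → (C p ↔ D p)) : numFolds l r C = numFolds l r D := by
  unfold numFolds
  congr 2
  ext p
  exact and_congr_right (h p)

theorem numFolds_eq_zero (h : ∀ p, IsFold l r p → ¬C p) : numFolds l r C = 0 := by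
  have : {p | IsFold l r p ∧ C p} = ∅ := Set.eq_empty_of_forall_notMem fun p hp => h p hp.1 hp.2
  rw [numFolds, this, Set.image_empty, Set.ncard_empty]

theorem numFolds_eq_add (hD : OrderInvariant l r D) :
    numFolds l r C = numFolds l r (fun p => C p ∧ D p) + numFolds l r (fun p => C p ∧ ¬D p) := by
  have hfin : (𝒫 (Set.Icc l r ×ˢ Set.Icc l r)).Finite :=
    ((Set.finite_Icc l r).prod (Set.finite_Icc l r)).powerset
  have finite (s : Set (ℤ → ℤ)) : (layerOrder l r '' s).Finite :=
    hfin.subset (Set.image_subset_iff.2 fun p _ xy h => h.1)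
  unfold numFolds
  rw [← Set.ncard_union_eq ?_ (finite _) (finite _), ← Set.image_union]
  · congr 2
    ext p
    simp only [Set.mem_ofPred_eq, Set.mem_union]
    tauto
  · rw [Set.disjoint_left]
    rintro _ ⟨p, hp, rfl⟩ ⟨q, hq, e⟩
    exact hq.2.2 ((hD q p (layerOrder_eq_iff.1 e)).2 hp.2.2)

theorem numFolds_neg_one_one (h : ∀ p, IsFold (-1) 1 p → C p) : numFolds (-1) 1 C = 1 := by
  have hneg : IsFold (-1) 1 Neg.neg :=
    { left_neg := by omega
      right_pos := by omega
      injOn := neg_injective.injOn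
      descends_iff := by grind
      noCross := by grind }
  refine Set.ncard_eq_one.2 ⟨layerOrder (-1) 1 Neg.neg, ?_⟩
  have hmem : layerOrder (-1) 1 Neg.neg ∈ layerOrder (-1) 1 '' {p | IsFold (-1) 1 p ∧ C p} :=
    Set.mem_image_of_mem _ ⟨hneg, h _ hneg⟩
  refine (Set.Nonempty.subset_singleton_iff ⟨_, hmem⟩).1 ?_
  rintro _ ⟨p, ⟨hp, -⟩, rfl⟩
  refine layerOrder_eq_iff.2 fun x y _ _ _ _ => ?_
  have := hp.center
  have hx : x = -1 ∨ x = 0 ∨ x = 1 := by omega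
  have hy : y = -1 ∨ y = 0 ∨ y = 1 := by omega
  rcases hx with rfl | rfl | rfl <;> rcases hy with rfl | rfl | rfl <;> omega

theorem numFolds_eq_of_bijective {l' r' : ℤ} {C' : (ℤ → ℤ) → Prop} (f : (ℤ → ℤ) → ℤ → ℤ)
    (hf : ∀ p, IsFold l r p → C p → IsFold l' r' (f p) ∧ C' (f p))
    (hwell : ∀ p q, SameOrder l r p q → SameOrder l' r' (f p) (f q))
    (hinj : ∀ p q, IsFold l r p → C p → IsFold l r q → C q → SameOrder l' r' (f p) (f q) →
      SameOrder l r p q)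
    (hsurj : ∀ q, IsFold l' r' q → C' q → ∃ p, IsFold l r p ∧ C p ∧ SameOrder l' r' (f p) q) :
    numFolds l r C = numFolds l' r' C' := by
  refine Set.ncard_congr (fun _ ho => layerOrder l' r' (f ho.choose)) ?_ ?_ ?_
  · intro _ ho
    exact ⟨_, hf _ ho.choose_spec.1.1 ho.choose_spec.1.2, rfl⟩
  · intro _ _ ho ho' e
    rw [← ho.choose_spec.2, ← ho'.choose_spec.2, layerOrder_eq_iff]
    obtain ⟨⟨hp, hC⟩, -⟩ := ho.choose_spec
    obtain ⟨⟨hp', hC'⟩, -⟩ := ho'.choose_spec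
    exact hinj _ _ hp hC hp' hC' (layerOrder_eq_iff.1 e)
  · rintro _ ⟨q, ⟨hq, hC⟩, rfl⟩
    obtain ⟨p, hp, hCp, hpq⟩ := hsurj q hq hC
    have ho : layerOrder l r p ∈ layerOrder l r '' {p | IsFold l r p ∧ C p} := ⟨p, ⟨hp, hCp⟩, rfl⟩
    refine ⟨_, ho, layerOrder_eq_iff.2 fun x y _ _ _ _ => ?_⟩
    rw [(hwell _ p (layerOrder_eq_iff.1 ho.choose_spec.2)).lt_iff_lt x y, hpq.lt_iff_lt x y]

theorem SameOrder.mirror (h : SameOrder l r p q) :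
    SameOrder (-r) (-l) (mirrorImage p) (mirrorImage q) := fun x y _ _ _ _ => by
  have := h.lt_iff_lt (-y) (-x)
  simp only [mirrorImage]
  omega

theorem numFolds_mirror (C : (ℤ → ℤ) → Prop) :
    numFolds l r (fun p => C (mirrorImage p)) = numFolds (-r) (-l) C :=
  numFolds_eq_of_bijective mirrorImage (fun _ hp hC => ⟨hp.mirror, hC⟩) (fun _ _ h => h.mirror)
    (fun p q _ _ _ _ h => by simpa only [mirrorImage_mirrorImage, neg_neg] using h.mirror)
    (fun q hq hC => ⟨mirrorImage q, by simpa only [neg_neg] using hq.mirror,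
      by rwa [mirrorImage_mirrorImage], fun _ _ _ _ _ _ => by rw [mirrorImage_mirrorImage]⟩)

/-! ### Attaching a face -/

/-- The new face `l - 1` is stacked immediately past face `z` as seen from face `l`: the new crease
wraps around `z` and around everything between `l` and `z`. For `z = l` it wraps around nothing. -/
def WrapsUpTo (l r z : ℤ) (p : ℤ → ℤ) : Prop :=
  ∀ y, l < y → y ≤ r → (Encloses p (l - 1) y ↔ y = z ∨ p y ∈ Set.uIoo (p l) (p z))

/-- Stacks the new face `l - 1` next to face `z`, on the side to which the crease `l - 1`, `l` has
to turn. -/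
def attach (l z : ℤ) (p : ℤ → ℤ) : ℤ → ℤ :=
  fun x => if x = l - 1 then 2 * p z + (if p l < p (l + 1) then 1 else -1) else 2 * p x

theorem attach_sub_one (l z : ℤ) (p : ℤ → ℤ) :
    attach l z p (l - 1) = 2 * p z + (if p l < p (l + 1) then 1 else -1) :=
  if_pos rfl

theorem attach_of_le {x : ℤ} (z : ℤ) (p : ℤ → ℤ) (hlx : l ≤ x) : attach l z p x = 2 * p x :=
  if_neg (by omega)

theorem attach_sameOrder (l r z : ℤ) (p : ℤ → ℤ) : SameOrder l r (attach l z p) p := by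
  intro x y hlx _ hly _
  rw [attach_of_le z p hlx, attach_of_le z p hly]
  omega

theorem wrapsUpTo_attach {z : ℤ} (h : IsFold l r p) (hlz : l ≤ z) (hzr : z ≤ r)
    (hside : z ≠ l → (p l < p z ↔ p l < p (l + 1))) : WrapsUpTo l r z (attach l z p) := by
  intro y hly hyr
  have := @h.injOn y
  rw [encloses_iff, mem_uIoo_iff, sub_add_cancel, attach_sub_one, attach_of_le z p le_rfl,
    attach_of_le z p hly.le, attach_of_le z p hlz]
  grind

theorem IsFold.of_succ (h : IsFold l r p)
    (hne : ∀ x, l ≤ x → x ≤ r → p (l - 1) ≠ p x) (hdir : p l < p (l - 1) ↔ p l < p (l + 1))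
    (hcross : ∀ y, l < y → y < r → y % 2 = (l - 1) % 2 →
      (Encloses p (l - 1) y ↔ Encloses p (l - 1) (y + 1))) : IsFold (l - 1) r p where
  left_neg := by have := h.left_neg; omega
  right_pos := h.right_pos
  injOn x hx y hy e := by
    have := @h.injOn x
    grind
  descends_iff x hlx hxr := by
    rcases hlx.eq_or_lt with rfl | hlx
    · have := h.left_neg
      have := h.right_pos
      have := h.descends_iff l
      have := h.ne l (l + 1)
      grind
    · exact h.descends_iff x
  noCross x y hlx hxr hly hyr hxy hne' := by
    rcases hlx.eq_or_lt with rfl | hlx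
    · exact hcross y (by omega) hyr hxy.symm
    rcases hly.eq_or_lt with rfl | hly
    · have := hcross x (by omega) hxr hxy
      have := h.ne l x
      have := h.ne l (x + 1)
      rw [sub_add_cancel]
      grind [encloses_iff]
    · exact h.noCross x y

theorem isFold_attach {z : ℤ} (h : IsFold l r p) (hlz : l ≤ z) (hzr : z ≤ r)
    (hside : z ≠ l → (p l < p z ↔ p l < p (l + 1)))
    (hpair : ∀ y, l < y → y < r → y % 2 = (l - 1) % 2 →
      (y = z ∨ p y ∈ Set.uIoo (p l) (p z) ↔ y + 1 = z ∨ p (y + 1) ∈ Set.uIoo (p l) (p z))) :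
    IsFold (l - 1) r (attach l z p) := by
  have hsame := attach_sameOrder l r z p
  have hwrap := wrapsUpTo_attach h hlz hzr hside
  refine (hsame.symm.isFold h).of_succ ?_ ?_ ?_
  · intro x hlx _
    rw [attach_sub_one, attach_of_le z p hlx]
    grind
  · rw [attach_sub_one, attach_of_le z p le_rfl, attach_of_le z p (by omega)]
    grind
  · intro y hly hyr hpar
    rw [hwrap y hly hyr.le, hwrap (y + 1) (by omega) (by omega),
      hsame.mem_uIoo_iff_mem_uIoo y l z, hsame.mem_uIoo_iff_mem_uIoo (y + 1) l z]
    exact hpair y hly hyr hpar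

theorem SameOrder.of_wrapsUpTo {z : ℤ} (hp : IsFold (l - 1) r p) (hq : IsFold (l - 1) r q)
    (hl : l < 0) (hlz : l ≤ z) (hzr : z ≤ r) (hpz : WrapsUpTo l r z p) (hqz : WrapsUpTo l r z q)
    (h : SameOrder l r p q) : SameOrder (l - 1) r p q := by
  have hr := hp.right_pos
  have hpl := hp.extremum l
  have hql := hq.extremum l
  have := h.lt_iff_lt l (l + 1)
  have new (y : ℤ) (hly : l ≤ y) (hyr : y ≤ r) :
      (p (l - 1) < p y ↔ q (l - 1) < q y) ∧ (p y < p (l - 1) ↔ q y < q (l - 1)) := by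
    rcases hly.eq_or_lt with rfl | hly
    · grind
    have hwrap : Encloses p (l - 1) y ↔ Encloses q (l - 1) y := by
      rw [hpz y hly hyr, hqz y hly hyr, h.mem_uIoo_iff_mem_uIoo y l z]
    have := hp.ne (l - 1) y
    have := hq.ne (l - 1) y
    have := h.lt_iff_lt l y
    have := h.lt_iff_lt y l
    rw [encloses_iff, encloses_iff, sub_add_cancel] at hwrap
    omega
  intro x y hlx hxr hly hyr
  rcases hlx.eq_or_lt with rfl | hlx <;> rcases hly.eq_or_lt with rfl | hly
  · simp only [lt_irrefl]
  · exact (new y (by omega) hyr).1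
  · exact (new x (by omega) hxr).2
  · exact h.lt_iff_lt x y

theorem numFolds_attach_left {z : ℤ} (hl : l < 0) (hr : 0 < r) (hlz : l ≤ z) (hzr : z ≤ r)
    (hC : OrderInvariant l r C)
    (hside : ∀ p, IsFold l r p → C p → z ≠ l → (p l < p z ↔ p l < p (l + 1)))
    (hpair : ∀ p, IsFold l r p → C p → ∀ y, l < y → y < r → y % 2 = (l - 1) % 2 →
      (y = z ∨ p y ∈ Set.uIoo (p l) (p z) ↔ y + 1 = z ∨ p (y + 1) ∈ Set.uIoo (p l) (p z))) :
    numFolds (l - 1) r (fun p => C p ∧ WrapsUpTo l r z p) = numFolds l r C := by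
  refine numFolds_eq_of_bijective id (fun p hp hCp => ⟨?_, hCp.1⟩) ?_ ?_ ?_
  · exact hp.mono (by omega) le_rfl hl hr
  · exact fun p q h x y _ _ _ _ => h.lt_iff_lt x y
  · exact fun p q hp hCp hq hCq h => .of_wrapsUpTo hp hq hl hlz hzr hCp.2 hCq.2 h
  · intro q hq hCq
    have hsame := attach_sameOrder l r z q
    have hs := hside q hq hCq
    exact ⟨attach l z q, isFold_attach hq hlz hzr hs (hpair q hq hCq),
      ⟨(hC _ _ hsame).2 hCq, wrapsUpTo_attach hq hlz hzr hs⟩, hsame⟩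

/-- The mirror image of `WrapsUpTo`, for a new face `r + 1`. -/
def WrapsDownTo (l r z : ℤ) (p : ℤ → ℤ) : Prop :=
  ∀ y, l ≤ y → y < r → (Encloses p r y ↔ y = z ∨ p y ∈ Set.uIoo (p r) (p z))

theorem wrapsDownTo_mirrorImage {z : ℤ} :
    WrapsDownTo l r z (mirrorImage p) ↔ WrapsUpTo (-r) (-l) (-z) p := by
  have flip (y : ℤ) : (Encloses (mirrorImage p) r y ↔
        y = z ∨ mirrorImage p y ∈ Set.uIoo (mirrorImage p r) (mirrorImage p z)) ↔
      (Encloses p (-r - 1) (-y) ↔ -y = -z ∨ p (-y) ∈ Set.uIoo (p (-r)) (p (-z))) := by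
    rw [encloses_mirrorImage, mirrorImage_mem_uIoo_iff, neg_inj]
  constructor
  · intro h y hly hyr
    simpa only [neg_neg] using (flip (-y)).1 (h (-y) (by omega) (by omega))
  · exact fun h y hly hyr => (flip y).2 (h (-y) (by omega) (by omega))

theorem numFolds_attach_right {z : ℤ} (hl : l < 0) (hr : 0 < r) (hlz : l ≤ z) (hzr : z ≤ r)
    (hC : OrderInvariant l r C)
    (hside : ∀ p, IsFold l r p → C p → z ≠ r → (p z < p r ↔ p (r - 1) < p r))
    (hpair : ∀ p, IsFold l r p → C p → ∀ y, l < y → y < r → y % 2 = (r + 1) % 2 →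
      (y = z ∨ p y ∈ Set.uIoo (p r) (p z) ↔ y - 1 = z ∨ p (y - 1) ∈ Set.uIoo (p r) (p z))) :
    numFolds l (r + 1) (fun p => C p ∧ WrapsDownTo l r z p) = numFolds l r C := by
  have hleft := numFolds_attach_left (l := -r) (r := -l) (z := -z) (C := fun p => C (mirrorImage p))
    (by omega) (by omega) (by omega) (by omega)
    (fun p q h => hC _ _ (by simpa only [neg_neg] using h.mirror)) ?_ ?_
  · rw [numFolds_mirror, neg_neg, neg_neg] at hleft
    rw [← hleft, ← neg_neg l, ← neg_neg (r + 1), ← numFolds_mirror, neg_add', neg_neg]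
    exact numFolds_congr fun p _ => and_congr_right fun _ => wrapsDownTo_mirrorImage
  · intro p hp hCp hz
    have := hside _ (by simpa only [neg_neg] using hp.mirror) hCp (by omega)
    simp only [mirrorImage] at this
    grind
  · intro p hp hCp y hly hyr hy
    have := hpair _ (by simpa only [neg_neg] using hp.mirror) hCp (-y) (by omega) (by omega)
      (by omega)
    rw [mirrorImage_mem_uIoo_iff, mirrorImage_mem_uIoo_iff] at this
    grind

/-! ### Recursions -/

/-- The last mountain crease is not trivial: some face is stacked inside it. -/
def WrapsSome (l r : ℤ) (p : ℤ → ℤ) : Prop := ∃ y, l ≤ y ∧ y ≤ r ∧ Encloses p l y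

theorem orderInvariant_wrapsSome (hlr : l < r) : OrderInvariant l r (WrapsSome l r) :=
  fun p q h => exists_congr fun y => and_congr_right fun _ => and_congr_right fun _ =>
    h.encloses_iff_encloses l y

theorem not_wrapsSome_iff : ¬WrapsSome (l - 1) r p ↔ WrapsUpTo l r l p := by
  simp only [WrapsSome, WrapsUpTo, encloses_iff, sub_add_cancel, mem_uIoo_iff]
  constructor
  · grind
  · rintro h ⟨y, hly, hyr, hy⟩
    grind

theorem numFolds_pred (hl : l < 0) (hr : 0 < r) :
    numFolds (l - 1) r (fun _ => True) =
      numFolds l r (fun _ => True) + numFolds (l - 1) r (WrapsSome (l - 1) r) := by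
  rw [numFolds_eq_add (orderInvariant_wrapsSome (by omega)), add_comm,
    ← numFolds_attach_left (z := l) hl hr le_rfl (by omega) (fun _ _ _ => Iff.rfl)]
  · simp only [true_and, not_wrapsSome_iff]
  · exact fun _ _ _ h => absurd rfl h
  · intro p _ _ y _ _ _
    simp only [Set.uIoo_self, Set.mem_empty_iff_false, or_false]
    omega

theorem numFolds_wrapsSome_of_lt (hr : 0 < r) (hlr : r < -l) :
    numFolds l r (WrapsSome l r) =
      numFolds l r (fun p => Encloses p l r ∧ Outward p l) +
        numFolds l r (fun p => Encloses p l r ∧ ¬Outward p l) := by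
  rw [← numFolds_eq_add (orderInvariant_outward (by omega) (by omega))]
  refine numFolds_congr fun p h => ⟨?_, fun hr => ⟨r, by omega, le_rfl, hr⟩⟩
  rintro ⟨y, hly, hyr, hy⟩
  by_cases ho : Outward p l
  · exact h.encloses_of_outward ho r
  · exact h.encloses_last_of_encloses (by omega) ho y hy

theorem numFolds_wrapsSome_of_eq (hn : 2 ≤ n) :
    numFolds (-n) n (WrapsSome (-n) n) =
      numFolds (-n) n (fun p => Encloses p (-n) n ∧ Outward p (-n)) +
        numFolds (-n) n (fun p => Encloses p (-n) n ∧ ¬Outward p (-n)) +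
        numFolds (-n) n (fun p => Outward p (-n) ∧ ¬Encloses p (-n) n) := by
  rw [numFolds_eq_add (orderInvariant_encloses (x := -n) (y := n)),
    ← numFolds_eq_add (orderInvariant_outward (by omega) (by omega))]
  congr 1
  · exact numFolds_congr fun p _ => ⟨And.right, fun hr => ⟨⟨n, by omega, le_rfl, hr⟩, hr⟩⟩
  · refine numFolds_congr fun p h => and_congr_left fun hr => ⟨?_, fun ho => ?_⟩
    · rintro ⟨y, hly, hyr, hy⟩
      by_contra ho
      exact hr (h.encloses_last_of_encloses (by omega) ho y hy)
    · exact ⟨n - 1, by omega, by omega, h.encloses_of_outward ho (n - 1)⟩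

theorem numFolds_outward_pred_and_encloses (hl : l < 0) (hr : 0 < r) (hlr : r ≤ -l) :
    numFolds (l - 1) r (fun p => Encloses p l r ∧ Outward p (l - 1)) =
      numFolds l r (fun p => Encloses p l r ∧ Outward p l) := by
  rw [← numFolds_attach_left (l := l) (z := l + 1) hl hr (by omega) (by omega)
    (.and orderInvariant_encloses (orderInvariant_outward (by omega) (by omega)))
    (fun p _ _ _ => Iff.rfl)]
  · refine numFolds_congr fun p h => ?_
    have hsucc := h.outward_succ (by omega)
    have hf : IsFold l r p := h.mono (by omega) le_rfl hl hr
    rw [sub_add_cancel] at hsucc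
    constructor
    · refine fun ⟨hlr', ho⟩ => ⟨⟨hlr', hsucc ho⟩, fun y hly hyr => ?_⟩
      have := h.encloses_of_outward ho y
      have hinner (hy : l + 1 < y) (hyr : y < r) := hf.encloses_of_outward (hsucc ho) y
      unfold Encloses at *
      grind
    · refine fun ⟨⟨hlr', _⟩, hwrap⟩ => ⟨hlr', Or.inr ?_⟩
      rw [show l - 1 + 2 = l + 1 by ring]
      exact (hwrap (l + 1) (by omega) (by omega)).2 (Or.inl rfl)
  · intro p h ⟨hlr', ho⟩ y hly hyr hy
    have hleft (hy : l + 1 < y) := h.encloses_of_outward ho y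
    have hright (hy : y + 1 < r) := h.encloses_of_outward ho (y + 1)
    unfold Outward Encloses at *
    grind

theorem numFolds_encloses_and_outward_pred (hr : 0 < r) (hlr : r < -l) :
    numFolds (l - 1) r (fun p => Encloses p (l - 1) r ∧ Outward p (l - 1)) =
      numFolds l r (fun p => Encloses p l r ∧ Outward p l) := by
  rw [← numFolds_outward_pred_and_encloses (l := l) (by omega) hr (by omega)]
  refine numFolds_congr fun p h => and_congr_left fun ho => iff_of_true ?_ ?_
  · exact h.encloses_of_outward ho r
  · have hs := h.outward_succ (by omega) ho
    rw [sub_add_cancel] at hs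
    exact (h.mono (by omega) le_rfl (by omega) hr).encloses_of_outward hs r

theorem IsFold.mem_uIoo_ends (h : IsFold (-n) n p) (ho : Outward p (-n))
    (hn : ¬Encloses p (-n) n) (y : ℤ) (hly : -n < y := by omega) (hyr : y < n := by omega) :
    p y ∈ Set.uIoo (p (-n)) (p n) := by
  have := h.descends_iff (-n)
  have := h.descends_iff (n - 1)
  have := h.ne (-n + 1) n
  have hlast (hn1 : n ≠ 1) := h.encloses_of_outward ho (n - 1)
  have hy (hyl : y ≠ -n + 1) := h.encloses_of_outward ho y
  rw [mem_uIoo_iff]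
  grind [encloses_iff]

theorem numFolds_outward_pred_and_not_encloses (hn : 0 < n) :
    numFolds (-n - 1) n (fun p => Outward p (-n - 1) ∧ ¬Encloses p (-n) n) =
      numFolds (-n) n (fun p => Outward p (-n) ∧ ¬Encloses p (-n) n) := by
  rw [← numFolds_attach_left (l := -n) (z := n) (by omega) hn (by omega) le_rfl
    ((orderInvariant_outward (by omega) (by omega)).and (.not orderInvariant_encloses))]
  · refine numFolds_congr fun p h => ?_
    have hf : IsFold (-n) n p := h.mono (by omega) le_rfl (by omega) hn
    have hsucc := h.outward_succ (by omega)
    rw [sub_add_cancel] at hsucc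
    constructor
    · refine fun ⟨ho, hi⟩ => ⟨⟨hsucc ho, hi⟩, fun y hly hyr => iff_of_true ?_ ?_⟩
      · exact h.encloses_of_outward ho y
      · exact hyr.eq_or_lt.imp_right fun hyn => hf.mem_uIoo_ends (hsucc ho) hi y
    · refine fun ⟨⟨ho, hi⟩, hwrap⟩ => ⟨Or.inr ((hwrap _ (by omega) (by omega)).2 ?_), hi⟩
      have := hf.mem_uIoo_ends ho hi (-n - 1 + 2)
      grind
  · intro p h ⟨ho, hi⟩ _
    have := h.mem_uIoo_ends ho hi (-n + 1)
    grind [mem_uIoo_iff]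
  · intro p h ⟨ho, hi⟩ y hly hyr _
    have := h.mem_uIoo_ends ho hi y
    have hright (hy : y + 1 < n) := h.mem_uIoo_ends ho hi (y + 1)
    grind

theorem IsFold.mem_uIoo_ends_of_pred (h : IsFold (-n - 1) n p) (hn : 0 < n)
    (ho : Outward p (-n - 1)) (hi : ¬Encloses p (-n) n) (y : ℤ) (hly : -n < y := by omega)
    (hyr : y < n := by omega) : p y ∈ Set.uIoo (p (-n)) (p n) := by
  have ho' := h.outward_succ (by omega) ho
  rw [sub_add_cancel] at ho'
  exact (h.mono (by omega) le_rfl (by omega) hn).mem_uIoo_ends ho' hi y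

theorem IsFold.not_encloses_and_wrapsDownTo (h : IsFold (-n - 1) (n + 1) p) (hn : 0 < n)
    (ho : Outward p (-n - 1)) (hi : ¬Encloses p (-n - 1) (n + 1)) :
    ¬Encloses p (-n) n ∧ WrapsDownTo (-n - 1) n (-n) p := by
  have between (y : ℤ) (hly : -n ≤ y) (hyr : y ≤ n) :
      p y ∈ Set.uIoo (p (-n - 1)) (p (n + 1)) := by
    have h' : IsFold (-(n + 1)) (n + 1) p := by rwa [neg_add']
    rw [← neg_add'] at ho hi ⊢
    exact h'.mem_uIoo_ends ho hi y
  have hi' : ¬Encloses p (-n) n := by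
    have := h.noCross (-n) n
    grind [encloses_iff, mem_uIoo_iff]
  refine ⟨hi', fun y hly hyr => ?_⟩
  have inner (z : ℤ) (hlz : -n < z) (hzr : z < n) : p z ∈ Set.uIoo (p (-n)) (p n) :=
    (h.mono le_rfl (by omega) (by omega) hn).mem_uIoo_ends_of_pred hn ho hi' z
  have := h.extremum (-n)
  rcases hly.eq_or_lt with rfl | hly <;> grind [encloses_iff, mem_uIoo_iff]

theorem numFolds_outward_and_not_encloses_succ (hn : 0 < n) :
    numFolds (-n - 1) (n + 1) (fun p => Outward p (-n - 1) ∧ ¬Encloses p (-n - 1) (n + 1)) =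
      numFolds (-n - 1) n (fun p => Outward p (-n - 1) ∧ ¬Encloses p (-n) n) := by
  rw [← numFolds_attach_right (z := -n) (by omega) hn (by omega) (by omega)
    ((orderInvariant_outward (by omega) (by omega)).and (.not orderInvariant_encloses))]
  · refine numFolds_congr fun p h => ⟨fun ⟨ho, hi⟩ => ?_, fun ⟨⟨ho, _⟩, hwrap⟩ => ⟨ho, ?_⟩⟩
    · have := h.not_encloses_and_wrapsDownTo hn ho hi
      exact ⟨⟨ho, this.1⟩, this.2⟩
    · have := hwrap (-n - 1) le_rfl (by omega)
      have := hwrap (-n) (by omega) (by omega)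
      have := h.encloses_of_outward ho n
      grind [encloses_iff, mem_uIoo_iff]
  · intro p h ⟨ho, hi⟩ _
    have := h.mem_uIoo_ends_of_pred hn ho hi (n - 1)
    grind [mem_uIoo_iff]
  · intro p h ⟨ho, hi⟩ y hly hyr _
    have := h.mem_uIoo_ends_of_pred hn ho hi y
    have hleft (hy : -n < y - 1) := h.mem_uIoo_ends_of_pred hn ho hi (y - 1)
    rw [Set.uIoo_comm]
    grind

theorem numFolds_outward_and_not_encloses (hn : 1 ≤ n) :
    numFolds (-n) n (fun p => Outward p (-n) ∧ ¬Encloses p (-n) n) = 1 := by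
  induction n, hn using Int.leInduction with
  | base =>
    refine numFolds_neg_one_one fun p h => ⟨Or.inl rfl, ?_⟩
    have := h.center
    grind [encloses_iff]
  | succ n hn ih =>
    rw [neg_add', numFolds_outward_and_not_encloses_succ (by omega),
      numFolds_outward_pred_and_not_encloses (by omega), ih]

theorem numFolds_encloses_succ_and (hn : 0 < n) (hD : OrderInvariant (-n - 1) n D) :
    numFolds (-n - 1) (n + 1) (fun p => Encloses p (-n - 1) (n + 1) ∧ D p) =
      numFolds (-n - 1) n (fun p => Encloses p (-n - 1) n ∧ D p) := by
  rw [← numFolds_attach_right (r := n) (z := n) (by omega) hn (by omega) le_rfl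
    (.and orderInvariant_encloses hD)]
  · refine numFolds_congr fun p h => ?_
    simp only [WrapsDownTo, Set.uIoo_self, Set.mem_empty_iff_false, or_false]
    constructor
    · rintro ⟨he, hD⟩
      rw [← neg_add'] at h he
      have hpred := h.encloses_pred he
      rw [neg_add', add_sub_cancel_right] at hpred
      refine ⟨⟨hpred, hD⟩, fun y hly hyr => iff_of_false ?_ hyr.ne⟩
      simpa only [add_sub_cancel_right] using h.not_encloses_last he y
    · rintro ⟨⟨he, hD⟩, hwrap⟩
      refine ⟨?_, hD⟩
      have := hwrap (-n - 1)
      have := hwrap (-n)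
      have := h.ne (-n - 1) (n + 1)
      have := h.ne (-n) (n + 1)
      grind [encloses_iff]
  · exact fun _ _ _ h => absurd rfl h
  · intro p _ _ y _ _ _
    simp only [Set.uIoo_self, Set.mem_empty_iff_false, or_false]
    omega

theorem numFolds_encloses_and_outward_pred_of_eq (hn : 1 ≤ n) :
    numFolds (-n - 1) n (fun p => Encloses p (-n - 1) n ∧ Outward p (-n - 1)) =
      numFolds (-n) n (fun p => Encloses p (-n) n ∧ Outward p (-n)) + 1 := by
  rw [numFolds_eq_add (orderInvariant_encloses (x := -n) (y := n)),
    ← numFolds_outward_pred_and_encloses (by omega) (by omega) (by omega),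
    ← numFolds_outward_and_not_encloses hn, ← numFolds_outward_pred_and_not_encloses (by omega)]
  have last {p : ℤ → ℤ} (h : IsFold (-n - 1) n p) (ho : Outward p (-n - 1)) :
      Encloses p (-n - 1) n := h.encloses_of_outward ho n
  congr 1 <;> refine numFolds_congr fun p h => ?_ <;> have := last h <;> tauto

theorem numFolds_encloses_and_outward_of_eq (hn : 1 ≤ n) :
    (numFolds (-n) n (fun p => Encloses p (-n) n ∧ Outward p (-n)) : ℤ) = n - 1 := by
  induction n, hn using Int.leInduction with
  | base =>
    rw [numFolds_eq_zero, Nat.cast_zero, sub_self]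
    rintro p h ⟨he, -⟩
    have := h.center
    grind [encloses_iff]
  | succ n hn ih =>
    rw [neg_add', numFolds_encloses_succ_and (by omega) (orderInvariant_outward le_rfl (by omega)),
      numFolds_encloses_and_outward_pred_of_eq hn]
    omega

theorem numFolds_encloses_and_outward_of_lt (hr : 1 ≤ r) (hlr : l ≤ -r - 1) :
    (numFolds l r (fun p => Encloses p l r ∧ Outward p l) : ℤ) = r := by
  induction l, hlr using Int.leInductionDown with
  | base =>
    have := numFolds_encloses_and_outward_of_eq hr
    rw [numFolds_encloses_and_outward_pred_of_eq hr]
    omega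
  | pred l hl ih => rw [numFolds_encloses_and_outward_pred (by omega) (by omega), ih]

theorem IsFold.mem_uIoo_last_iff_of_outward (h : IsFold l r p) (hlr : -r - 1 ≤ l) (hrl : r ≤ -l)
    (he : Encloses p l r) (ho : Outward p l) (hi : ¬Encloses p (l + 1) r) (y : ℤ) (hly : l < y)
    (hyr : y < r) : p y ∈ Set.uIoo (p l) (p r) ↔ y = -l - 1 := by
  have hl : l ≠ -1 := by
    rintro rfl
    have := h.center
    grind [encloses_iff]
  have hf : IsFold (l + 1) r p := h.mono (by omega) le_rfl (by omega) h.right_pos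
  have hinner (h1 : l + 2 < y) (h2 : y < -l - 1) :=
    hf.encloses_of_outward (h.outward_succ (by omega) ho) y
  have := h.encloses_of_outward ho (l + 2)
  have := h.descends_iff l
  have := h.descends_iff (r - 1)
  have := h.ne (r - 1) r
  have hlast (h1 : l + 1 < r - 1) (h2 : r - 1 < -l) := h.encloses_of_outward ho (r - 1)
  rw [mem_uIoo_iff]
  grind [encloses_iff]

theorem IsFold.mem_uIoo_last_iff_of_not_outward (h : IsFold l r p) (hlr : -r - 1 ≤ l)
    (hrl : r ≤ -l) (he : Encloses p l r) (hi : ¬Outward p l) (y : ℤ) (hly : l < y)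
    (hyr : y < r) : p y ∈ Set.uIoo (p l) (p r) ↔ y = -l - 1 := by
  have hl : l ≠ -1 := by
    rintro rfl
    have := h.center
    grind [encloses_iff]
  have := h.neg_le_of_encloses hi y
  have := h.descends_iff l
  have := h.descends_iff (r - 1)
  have := h.ne (r - 1) r
  rw [mem_uIoo_iff]
  rcases hrl.eq_or_lt with hrl | hrl
  · obtain rfl : l = -r := by omega
    have := h.descends_iff (r - 2)
    have := h.ne (r - 2) (r - 1)
    have := h.encloses_pred he
    have := h.not_encloses_last he (r - 2)
    grind [encloses_iff]
  · have := h.noCross l (r - 1)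
    grind [encloses_iff]

theorem IsFold.mem_uIoo_last_iff (h : IsFold l r p) (hlr : -r - 1 ≤ l) (hrl : r ≤ -l)
    (he : Encloses p l r) (hi : ¬Outward p l ∨ ¬Encloses p (l + 1) r) (y : ℤ) (hly : l < y)
    (hyr : y < r) : p y ∈ Set.uIoo (p l) (p r) ↔ y = -l - 1 := by
  by_cases ho : Outward p l
  · exact h.mem_uIoo_last_iff_of_outward hlr hrl he ho (hi.resolve_left (not_not.2 ho)) y hly hyr
  · exact h.mem_uIoo_last_iff_of_not_outward hlr hrl he ho y hly hyr

theorem IsFold.not_outward_or_not_encloses (h : IsFold (l - 1) r p) (hl : l < 0)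
    (he : Encloses p (l - 1) r) (hi : ¬Outward p (l - 1)) :
    Encloses p l r ∧ (¬Outward p l ∨ ¬Encloses p (l + 1) r) := by
  have := h.right_pos
  have hmid : Encloses p l (l - 1) := h.encloses_sub_one hl hi
  have he' : Encloses p l r := h.encloses_of_encloses_sub_one hl hi he
  refine ⟨he', not_and_or.1 fun ⟨ho, _⟩ => ?_⟩
  have := h.noCross (l + 1) (l - 1)
  have := h.center
  unfold Outward at ho
  grind [encloses_iff]

theorem IsFold.encloses_pred_and_not_outward_iff (h : IsFold (l - 1) r p) (hl : l < 0)
    (hlr : -r - 1 ≤ l) (hrl : r ≤ -l) :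
    Encloses p (l - 1) r ∧ ¬Outward p (l - 1) ↔
      (Encloses p l r ∧ (¬Outward p l ∨ ¬Encloses p (l + 1) r)) ∧ WrapsUpTo l r r p := by
  have hr := h.right_pos
  have hf : IsFold l r p := h.mono (by omega) le_rfl hl hr
  constructor
  · rintro ⟨he, hi⟩
    have hC := h.not_outward_or_not_encloses hl he hi
    refine ⟨hC, fun y hly hyr => ?_⟩
    have hmid := hf.mem_uIoo_last_iff hlr hrl hC.1 hC.2 y hly
    have := h.neg_le_of_encloses hi y
    have hpair (hlr : l = -r) := h.noCross (l - 1) (r - 1)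
    unfold Encloses at *
    grind
  · rintro ⟨⟨he, hi⟩, hwrap⟩
    refine ⟨(hwrap r (by omega) le_rfl).2 (Or.inl rfl), fun ho => ?_⟩
    have hmid := hf.mem_uIoo_last_iff hlr hrl he hi (l + 1) (by omega)
    have := hwrap (l + 1)
    have := h.center
    unfold Outward at ho
    grind [encloses_iff]

theorem numFolds_encloses_and_not_outward_pred (hl : l < 0) (hr : 0 < r) (hlr : -r - 1 ≤ l)
    (hrl : r ≤ -l) :
    numFolds (l - 1) r (fun p => Encloses p (l - 1) r ∧ ¬Outward p (l - 1)) =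
      numFolds l r (fun p => Encloses p l r ∧ ¬Outward p l) +
        numFolds l r (fun p => Encloses p l r ∧ Outward p l ∧ ¬Encloses p (l + 1) r) := by
  have hE : OrderInvariant l r (Encloses · l r) := orderInvariant_encloses
  have hE' : OrderInvariant l r (Encloses · (l + 1) r) := orderInvariant_encloses
  have hO : OrderInvariant l r (Outward · l) := orderInvariant_outward le_rfl (by omega)
  calc numFolds (l - 1) r (fun p => Encloses p (l - 1) r ∧ ¬Outward p (l - 1))
      = numFolds (l - 1) r (fun p =>
          (Encloses p l r ∧ ¬(Outward p l ∧ Encloses p (l + 1) r)) ∧ WrapsUpTo l r r p) :=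
        numFolds_congr fun p h => by
          rw [h.encloses_pred_and_not_outward_iff hl hlr hrl, not_and_or]
    _ = numFolds l r (fun p => Encloses p l r ∧ ¬(Outward p l ∧ Encloses p (l + 1) r)) := by
        refine numFolds_attach_left hl hr (by omega) le_rfl (hE.and (hO.and hE').not) ?_ ?_
        · intro p _ ⟨he, _⟩ _
          grind [encloses_iff]
        · intro p h ⟨he, hi⟩ y hly hyr hy
          have hmid := h.mem_uIoo_last_iff hlr hrl he (not_and_or.1 hi)
          grind
    _ = _ := by
        rw [numFolds_eq_add hO.not]
        congr 1 <;> refine numFolds_congr fun p _ => ?_ <;> grind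

theorem numFolds_encloses_and_outward_and_not_encloses (hn : 1 ≤ n) :
    numFolds (-n - 1) n
      (fun p => Encloses p (-n - 1) n ∧ Outward p (-n - 1) ∧ ¬Encloses p (-n) n) = 1 := by
  rw [← numFolds_outward_and_not_encloses hn, ← numFolds_outward_pred_and_not_encloses (by omega)]
  exact numFolds_congr fun p h => and_iff_right_of_imp fun ho => h.encloses_of_outward ho.1 n

theorem numFolds_encloses_succ_and_outward_and_not_encloses (hn : 1 ≤ n) :
    numFolds (-n - 1) (n + 1) (fun p =>
      Encloses p (-n - 1) (n + 1) ∧ Outward p (-n - 1) ∧ ¬Encloses p (-n) (n + 1)) = 1 := by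
  rw [← numFolds_encloses_and_outward_and_not_encloses hn, ← numFolds_encloses_succ_and (by omega)
    (.and (orderInvariant_outward le_rfl (by omega)) (.not orderInvariant_encloses))]
  exact numFolds_congr fun p h => by rw [h.noCross (-n) n]

theorem numFolds_encloses_and_not_outward_pred_of_eq (hn : 1 ≤ n) :
    (numFolds (-n - 1) n (fun p => Encloses p (-n - 1) n ∧ ¬Outward p (-n - 1)) : ℤ) = n - 1 := by
  induction n, hn using Int.leInduction with
  | base =>
    rw [numFolds_encloses_and_not_outward_pred (by omega) (by omega) (by omega) (by omega),
      numFolds_eq_zero, numFolds_eq_zero, Nat.cast_zero, sub_self]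
    all_goals
      intro p h
      have := h.center
      grind [encloses_iff]
  | succ n hn ih =>
    have hZ := numFolds_encloses_succ_and_outward_and_not_encloses hn
    rw [numFolds_encloses_and_not_outward_pred (by omega) (by omega) (by omega) (by omega),
      neg_add', sub_add_cancel, hZ,
      numFolds_encloses_succ_and (by omega) (.not (orderInvariant_outward le_rfl (by omega)))]
    omega

theorem numFolds_wrapsSome_succ (hn : 1 ≤ n) :
    (numFolds (-n - 1) (n + 1) (WrapsSome (-n - 1) (n + 1)) : ℤ) = 2 * n := by
  have hO : OrderInvariant (-n - 1) n (¬Outward · (-n - 1)) :=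
    .not (orderInvariant_outward le_rfl (by omega))
  have hin := numFolds_encloses_succ_and (by omega) hO
  have hin' := numFolds_encloses_and_not_outward_pred_of_eq hn
  have hout := numFolds_encloses_and_outward_of_eq (n := n + 1) (by omega)
  have hends := numFolds_outward_and_not_encloses (n := n + 1) (by omega)
  have hsum := numFolds_wrapsSome_of_eq (n := n + 1) (by omega)
  rw [neg_add'] at *
  omega

theorem numFolds_wrapsSome_pred (hn : 1 ≤ n) :
    (numFolds (-n - 1) n (WrapsSome (-n - 1) n) : ℤ) = 2 * n - 1 := by
  have hin := numFolds_encloses_and_not_outward_pred_of_eq hn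
  have hout := numFolds_encloses_and_outward_of_lt hn le_rfl
  rw [numFolds_wrapsSome_of_lt (by omega) (by omega)]
  omega

theorem numFolds_wrapsSome_pred_pred (hn : 1 ≤ n) :
    (numFolds (-n - 1 - 1) n (WrapsSome (-n - 1 - 1) n) : ℤ) = 2 * n := by
  have hin := numFolds_encloses_and_not_outward_pred_of_eq hn
  have hin' := numFolds_encloses_and_not_outward_pred (l := -n - 1) (r := n) (by omega) (by omega)
    (by omega) (by omega)
  have hone := numFolds_encloses_and_outward_and_not_encloses hn
  have hout := numFolds_encloses_and_outward_of_lt (l := -n - 1 - 1) hn (by omega)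
  rw [sub_add_cancel] at hin'
  rw [numFolds_wrapsSome_of_lt (by omega) (by omega)]
  omega

theorem numFolds_wrapsSome_of_le_neg_sub_three (hr : 1 ≤ r) (hlr : l ≤ -r - 3) :
    (numFolds l r (WrapsSome l r) : ℤ) = r := by
  rw [numFolds_wrapsSome_of_lt (by omega) (by omega),
    numFolds_eq_zero (C := fun p => Encloses p l r ∧ ¬Outward p l), add_zero,
    numFolds_encloses_and_outward_of_lt hr (by omega)]
  rintro p h ⟨he, hi⟩
  have := h.neg_le_of_encloses hi r he
  omega

theorem numFolds_true_of_eq (hn : 1 ≤ n) :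
    (numFolds (-n) n (fun _ => True) : ℤ) = 2 * n ^ 2 - 3 * n + 2 := by
  induction n, hn using Int.leInduction with
  | base =>
    rw [numFolds_neg_one_one fun _ _ => trivial]
    norm_num
  | succ n hn ih =>
    have hleft := numFolds_pred (l := -n) (r := n) (by omega) (by omega)
    have hright := numFolds_pred (l := -n) (r := n + 1) (by omega) (by omega)
    have hmirror := numFolds_mirror (l := -n) (r := n + 1) fun _ => True
    have hleft' := numFolds_wrapsSome_pred hn
    have hright' := numFolds_wrapsSome_succ hn
    rw [neg_neg, neg_add'] at hmirror
    rw [neg_add']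
    linarith

theorem numFolds_true_of_lt (hr : 1 ≤ r) (hlr : l ≤ -r - 1 - 1) :
    (numFolds l r (fun _ => True) : ℤ) = -l * r + r ^ 2 - r + 1 := by
  induction l, hlr using Int.leInductionDown with
  | base =>
    have hfirst := numFolds_pred (l := -r) (r := r) (by omega) (by omega)
    have hsecond := numFolds_pred (l := -r - 1) (r := r) (by omega) (by omega)
    have hfirst' := numFolds_wrapsSome_pred hr
    have hsecond' := numFolds_wrapsSome_pred_pred hr
    have heq := numFolds_true_of_eq hr
    linarith
  | pred l hl ih =>
    rw [numFolds_pred (by omega) (by omega), Nat.cast_add, ih,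
      numFolds_wrapsSome_of_le_neg_sub_three hr (by omega)]
    ring

end Counting

/-! ### Layer orderings of the strip -/

theorem faceVal_injOn (m : ℕ) (σ : Equiv.Perm (Fin m)) : Set.InjOn (faceVal σ) (Set.Iio m) := by
  intro i hi j hj e
  simp only [Set.mem_Iio] at hi hj
  simp only [faceVal, hi, hj, dif_pos, Fin.val_inj, EmbeddingLike.apply_eq_iff_eq] at e
  exact Fin.mk.inj e

theorem faceVal_val {m : ℕ} (σ : Equiv.Perm (Fin m)) (i : Fin m) : faceVal σ i = σ i :=
  dif_pos i.2

/-- A layer ordering as a position function on the strip whose faces are renumbered so that face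
`a` becomes face `0`. The stack is turned over if necessary, so that face `-1` is above face `0` as
`IsFold` requires. -/
def position (a : ℕ) {m : ℕ} (σ : Equiv.Perm (Fin m)) (x : ℤ) : ℤ :=
  (if Odd a then 1 else -1) * (faceVal σ (x + a).toNat : ℤ)

section Position

variable {a b m : ℕ} {σ τ : Equiv.Perm (Fin m)}

theorem position_sub (i : ℕ) :
    position a σ (i - a) = (if Odd a then 1 else -1) * (faceVal σ i : ℤ) := by
  rw [position, sub_add_cancel, Int.toNat_natCast]

theorem position_lt_position_iff (i j : ℕ) :
    position a σ (i - a) < position a σ (j - a) ↔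
      if Odd a then faceVal σ i < faceVal σ j else faceVal σ j < faceVal σ i := by
  rw [position_sub, position_sub]
  split_ifs <;> omega

theorem encloses_position_iff (i j : ℕ) :
    Encloses (position a σ) (i - a) (j - a) ↔
      StrictlyBetween (faceVal σ j) (faceVal σ i) (faceVal σ (i + 1)) := by
  rw [encloses_iff, show (i - a + 1 : ℤ) = (i + 1 : ℕ) - a by push_cast; ring]
  simp only [position_lt_position_iff, StrictlyBetween]
  split_ifs <;> omega

theorem injOn_position (hm : m = a + b + 1) : Set.InjOn (position a σ) (Set.Icc (-a) b) := by
  intro x ⟨hax, hxb⟩ y ⟨hay, hyb⟩ e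
  have hσ := @faceVal_injOn m σ (x + a).toNat (by grind) (y + a).toNat (by grind)
  simp only [position] at e
  split_ifs at e <;> omega

theorem descends_position_iff (i : ℕ) (hi : i + 1 < m) :
    (position a σ ((i + 1 : ℕ) - a) < position a σ (i - a) ↔
      (0 ≤ (i - a : ℤ) ↔ (i - a : ℤ) % 2 = 0)) ↔
    if ((if i < a then MV.M else MV.V) = MV.M ∧ Even i) ∨
        ((if i < a then MV.M else MV.V) = MV.V ∧ Odd i)
      then faceVal σ (i + 1) < faceVal σ i else faceVal σ i < faceVal σ (i + 1) := by
  have hne : faceVal σ (i + 1) ≠ faceVal σ i :=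
    (faceVal_injOn m σ).ne hi (Nat.lt_of_succ_lt hi) i.succ_ne_self
  rw [position_lt_position_iff]
  simp only [Nat.odd_iff, Nat.even_iff]
  by_cases hia : i < a <;> simp only [hia, if_true, if_false, reduceCtorEq, true_and, false_and,
    or_false, false_or] <;> grind

theorem validLayerOrdering_iff_isFold (ha : 0 < a) (hb : 0 < b) (hm : m = a + b + 1) :
    ValidLayerOrdering m (fun i => if i < a then MV.M else MV.V) σ ↔
      IsFold (-a) b (position a σ) := by
  constructor
  · rintro ⟨hmv, hcross⟩
    refine ⟨by omega, by omega, injOn_position hm, ?_, ?_⟩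
    · intro x hax hxb
      obtain ⟨i, rfl⟩ : ∃ i : ℕ, x = i - a := ⟨(x + a).toNat, by omega⟩
      have := (descends_position_iff i (by omega)).2 (hmv i (by omega))
      rwa [show (i - a + 1 : ℤ) = (i + 1 : ℕ) - a by push_cast; ring]
    · intro x y hax hxb hay hyb hxy _
      obtain ⟨i, rfl⟩ : ∃ i : ℕ, x = i - a := ⟨(x + a).toNat, by omega⟩
      obtain ⟨j, rfl⟩ : ∃ j : ℕ, y = j - a := ⟨(y + a).toNat, by omega⟩
      have := hcross i j (by omega) (by omega) (by omega)
      rwa [show (j - a + 1 : ℤ) = (j + 1 : ℕ) - a by push_cast; ring, encloses_position_iff,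
        encloses_position_iff, ← not_xor]
  · intro h
    refine ⟨fun i hi => ?_, fun i j hi hj hij => ?_⟩
    · have := h.descends_iff (i - a)
      rw [show (i - a + 1 : ℤ) = (i + 1 : ℕ) - a by push_cast; ring] at this
      exact (descends_position_iff i hi).1 this
    · rcases eq_or_ne i j with rfl | hne
      · refine (not_xor _ _).2 (iff_of_false ?_ ?_) <;>
          · unfold StrictlyBetween
            omega
      · have := h.noCross (i - a) (j - a)
        rwa [show (j - a + 1 : ℤ) = (j + 1 : ℕ) - a by push_cast; ring, encloses_position_iff,
          encloses_position_iff, ← not_xor] at this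

theorem sameOrder_position_iff (hm : m = a + b + 1) :
    SameOrder (-a) b (position a σ) (position a τ) ↔ ∀ i j, σ i < σ j ↔ τ i < τ j := by
  constructor
  · intro h i j
    have hij := h.lt_iff_lt ((i : ℕ) - a) ((j : ℕ) - a)
    have hji := h.lt_iff_lt ((j : ℕ) - a) ((i : ℕ) - a)
    simp only [position_lt_position_iff, faceVal_val, Fin.val_fin_lt] at hij hji
    split_ifs at hij hji
    exacts [hij, hji]
  · intro h x y hax hxb hay hyb
    obtain ⟨i, rfl⟩ : ∃ i : Fin m, x = (i : ℕ) - a := ⟨⟨(x + a).toNat, by omega⟩, by grind⟩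
    obtain ⟨j, rfl⟩ : ∃ j : Fin m, y = (j : ℕ) - a := ⟨⟨(y + a).toNat, by omega⟩, by grind⟩
    simp only [position_lt_position_iff, faceVal_val, Fin.val_fin_lt, h]

theorem eq_of_forall_lt_iff_lt (h : ∀ i j, σ i < σ j ↔ τ i < τ j) : σ = τ := by
  let e : Fin m ≃o Fin m := ⟨σ.symm.trans τ, fun {i j} => by
    simpa [not_lt] using (not_congr (h (σ.symm j) (σ.symm i))).symm⟩
  ext i
  have := DFunLike.congr_fun (Subsingleton.elim e (OrderIso.refl _)) (σ i)
  simpa [e] using congrArg Fin.val this.symm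

theorem exists_sameOrder_position {p : ℤ → ℤ} (hp : Set.InjOn p (Set.Icc (-a) b))
    (hm : m = a + b + 1) :
    ∃ σ : Equiv.Perm (Fin m), SameOrder (-a) b (position a σ) p := by
  let f : Fin m → ℤ := fun i => (if Odd a then 1 else -1) * p (i - a)
  have hf : Function.Injective f := by
    intro i j e
    have := @hp (i - a) (by grind) (j - a) (by grind)
    simp only [f] at e
    ext
    split_ifs at e <;> omega
  have hmono : StrictMono (f ∘ Tuple.sort f) :=
    (Tuple.monotone_sort f).strictMono_of_injective (hf.comp (Tuple.sort f).injective)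
  refine ⟨(Tuple.sort f).symm, fun x y hax hxb hay hyb => ?_⟩
  obtain ⟨i, rfl⟩ : ∃ i : Fin m, x = (i : ℕ) - a := ⟨⟨(x + a).toNat, by omega⟩, by grind⟩
  obtain ⟨j, rfl⟩ : ∃ j : Fin m, y = (j : ℕ) - a := ⟨⟨(y + a).toNat, by omega⟩, by grind⟩
  simp only [position_lt_position_iff, faceVal_val, Fin.val_fin_lt, ← hmono.lt_iff_lt,
    Function.comp_apply, Equiv.apply_symm_apply, f]
  split_ifs <;> omega

theorem foldCount_eq_numFolds (ha : 0 < a) (hb : 0 < b) :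
    foldCount (a + b + 1) (fun i => if i < a then MV.M else MV.V) =
      numFolds (-a) b fun _ => True := by
  let valid : Set (Equiv.Perm (Fin (a + b + 1))) :=
    {σ | ValidLayerOrdering _ (fun i => if i < a then MV.M else MV.V) σ}
  have himage : layerOrder (-a) b '' {p | IsFold (-a) b p ∧ True} =
      (fun σ => layerOrder (-a) b (position a σ)) '' valid := by
    apply Set.Subset.antisymm
    · rintro _ ⟨p, ⟨hp, -⟩, rfl⟩
      obtain ⟨σ, hσ⟩ := exists_sameOrder_position hp.injOn rfl
      exact ⟨σ, (validLayerOrdering_iff_isFold ha hb rfl).2 (hσ.symm.isFold hp),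
        layerOrder_eq_iff.2 hσ⟩
    · rintro _ ⟨σ, hσ, rfl⟩
      exact ⟨_, ⟨(validLayerOrdering_iff_isFold ha hb rfl).1 hσ, trivial⟩, rfl⟩
  rw [numFolds, himage, Set.ncard_image_of_injective]
  · rfl
  · intro σ τ e
    exact eq_of_forall_lt_iff_lt ((sameOrder_position_iff rfl).1 (layerOrder_eq_iff.1 e))

end Position

theorem stmt1_general (a b : ℕ) (hab : b + 1 < a) (hb : 1 ≤ b) :
    foldCount (a + b + 1) (fun i => if i < a then MV.M else MV.V) =
      a * b + b ^ 2 - b + 1 := by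
  have hcount := numFolds_true_of_lt (l := -a) (r := b) (by omega) (by omega)
  rw [foldCount_eq_numFolds (by omega) hb]
  have hle : b ≤ b ^ 2 := Nat.le_self_pow two_ne_zero b
  zify [show b ≤ a * b + b ^ 2 by omega]
  rw [hcount, neg_neg]

/-- Theorem: for `a > b + 1` and `b ≥ 4`, the assignment `M^a V^b` on the
`1 × (a+b+1)` strip folds in `ab + b² − b + 1` ways. -/
theorem stmt1 (a b : ℕ) (hab : b + 1 < a) (hb : 4 ≤ b) :
    foldCount (a + b + 1) (fun i => if i < a then MV.M else MV.V) =
      a * b + b ^ 2 - b + 1 :=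
  stmt1_general a b hab (by omega)
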